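/- For every integer d ≥ 0 and every positive integer ν: S(ν+d+1, ν) = Σ_{i=1}^{ν} i·S(i+d, i), where S denotes the Stirling number of the second kind. -/

import Mathlib

/-- The Stirling number of the second kind `S(p, q)`: the number of partitions of a
set with `p` elements into `q` nonempty blocks. -/
noncomputable def stirlingSecond (p q : ℕ) : ℕ :=
  Nat.card {P : Finpartition (Finset.univ : Finset (Fin p)) // P.parts.card = q}

def IsPt {α : Type*} (s : Finset α) (F : Finset (Finset α)) : Prop :=
  (∀ t ∈ F, t.Nonempty) ∧ (∀ t ∈ F, ∀ x ∈ t, x ∈ s) ∧ (∀ x ∈ s, ∃ t ∈ F, x ∈ t) ∧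
    (∀ t ∈ F, ∀ u ∈ F, ∀ x, x ∈ t → x ∈ u → t = u)

open Classical in
noncomputable def famA {α : Type*} (s : Finset α) (k : ℕ) : Finset (Finset (Finset α)) :=
  s.powerset.powerset.filter (fun F => IsPt s F ∧ F.card = k)

theorem mem_famA {α : Type*} (s : Finset α) (k : ℕ) (F : Finset (Finset α)) :
    F ∈ famA s k ↔ IsPt s F ∧ F.card = k := by
  simp only [famA, Finset.mem_filter, Finset.mem_powerset, and_iff_right_iff_imp]
  intro h t ht
  exact Finset.mem_powerset.2 (fun x hx => h.1.2.1 t ht x hx)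

open Classical in
theorem card_one {α : Type*} (s : Finset α) (a : α) (ha : a ∉ s) (k : ℕ) :
    ((famA (insert a s) (k+1)).filter (fun F => {a} ∈ F)).card = (famA s k).card := by
  have key : ∀ F, IsPt s F → ({a} : Finset α) ∉ F := fun F h h' =>
    ha (h.2.1 _ h' a (Finset.mem_singleton_self a))
  refine Finset.card_bij' (fun F _ => F.erase {a}) (fun F _ => insert {a} F) ?_ ?_ ?_ ?_
  · intro F hF
    simp only [Finset.mem_filter, mem_famA] at hF ⊢
    obtain ⟨⟨⟨h1, h2, h3, h4⟩, hc⟩, h⟩ := hF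
    refine ⟨⟨?_, ?_, ?_, ?_⟩, ?_⟩
    · intro t ht; exact h1 t (Finset.mem_of_mem_erase ht)
    · intro t ht x hx
      have := h2 t (Finset.mem_of_mem_erase ht) x hx
      rcases Finset.mem_insert.1 this with rfl | h'
      · exact absurd (h4 t (Finset.mem_of_mem_erase ht) _ h x hx (by simp)) (Finset.ne_of_mem_erase ht)
      · exact h'
    · intro x hx
      obtain ⟨t, ht, hxt⟩ := h3 x (Finset.mem_insert_of_mem hx)
      refine ⟨t, Finset.mem_erase.2 ⟨?_, ht⟩, hxt⟩
      rintro rfl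
      rw [Finset.mem_singleton] at hxt
      exact ha (hxt ▸ hx)
    · intro t ht u hu
      exact h4 t (Finset.mem_of_mem_erase ht) u (Finset.mem_of_mem_erase hu)
    · rw [Finset.card_erase_of_mem h, hc]; rfl
  · intro F hF
    simp only [Finset.mem_filter, mem_famA] at hF ⊢
    obtain ⟨hp, hc⟩ := hF
    have hk := key F hp
    obtain ⟨h1, h2, h3, h4⟩ := hp
    refine ⟨⟨⟨?_, ?_, ?_, ?_⟩, ?_⟩, by simp⟩
    · intro t ht
      rcases Finset.mem_insert.1 ht with rfl | ht
      · simp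
      · exact h1 t ht
    · grind
    · grind
    · grind
    · rw [Finset.card_insert_of_notMem hk, hc]
  · intro F hF
    exact Finset.insert_erase (Finset.mem_filter.1 hF).2
  · intro F hF
    exact Finset.erase_insert (key F ((mem_famA _ _ _).1 hF).1)

open Classical in
theorem card_two {α : Type*} (s : Finset α) (a : α) (ha : a ∉ s) (k : ℕ) :
    ((famA (insert a s) k).filter (fun F => {a} ∉ F)).card = k * (famA s k).card := by
  have hs : ((famA s k).sigma (fun F => F)).card = k * (famA s k).card := by
    rw [Finset.card_sigma, Finset.sum_const_nat (m := k), mul_comm]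
    intro F hF; exact ((mem_famA _ _ _).1 hF).2
  rw [← hs]
  symm
  refine Finset.card_bij (fun p _ => insert (insert a p.2) (p.1.erase p.2)) ?_ ?_ ?_
  · rintro ⟨F, t⟩ hp
    simp only [Finset.mem_sigma, Finset.mem_filter, mem_famA] at hp ⊢
    obtain ⟨⟨⟨h1, h2, h3, h4⟩, hc⟩, ht⟩ := hp
    have haF : ∀ u ∈ F, a ∉ u := fun u hu h => ha (h2 u hu a h)
    have hn : insert a t ∉ F.erase t := fun h =>
      haF _ (Finset.mem_of_mem_erase h) (Finset.mem_insert_self _ _)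
    refine ⟨⟨⟨?_, ?_, ?_, ?_⟩, ?_⟩, ?_⟩
    · intro u hu
      rcases Finset.mem_insert.1 hu with rfl | hu
      · simp
      · exact h1 u (Finset.mem_of_mem_erase hu)
    · grind
    · intro x hx
      rcases Finset.mem_insert.1 hx with rfl | hx
      · exact ⟨_, Finset.mem_insert_self _ _, Finset.mem_insert_self _ _⟩
      · obtain ⟨u, hu, hxu⟩ := h3 x hx
        by_cases hut : u = t
        · subst hut
          exact ⟨_, Finset.mem_insert_self _ _, Finset.mem_insert_of_mem hxu⟩
        · exact ⟨u, by grind, hxu⟩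
    · grind
    · rw [Finset.card_insert_of_notMem hn, Finset.card_erase_of_mem ht, hc]
      have : 0 < F.card := Finset.card_pos.2 ⟨t, ht⟩
      omega
    · intro h
      rcases Finset.mem_insert.1 h with h | h
      · obtain ⟨x, hx⟩ := h1 t ht
        have : x ∈ ({a} : Finset α) := h ▸ Finset.mem_insert_of_mem hx
        rw [Finset.mem_singleton] at this
        exact haF t ht (this ▸ hx)
      · exact haF _ (Finset.mem_of_mem_erase h) (by simp)
  · rintro ⟨F, t⟩ hp ⟨G, u⟩ hq h
    simp only [Finset.mem_sigma, mem_famA] at hp hq h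
    obtain ⟨⟨⟨-, h2, -, -⟩, -⟩, ht⟩ := hp
    obtain ⟨⟨⟨-, g2, -, -⟩, -⟩, hu⟩ := hq
    have haF : ∀ u ∈ F, a ∉ u := fun u hu h => ha (h2 u hu a h)
    have haG : ∀ u ∈ G, a ∉ u := fun u hu h => ha (g2 u hu a h)
    have e1 : insert a t = insert a u := by
      have : insert a t ∈ insert (insert a u) (G.erase u) := h ▸ Finset.mem_insert_self _ _
      rcases Finset.mem_insert.1 this with h | h
      · exact h
      · exact absurd (Finset.mem_insert_self _ _) (haG _ (Finset.mem_of_mem_erase h))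
    have e2 : t = u := by
      rw [← Finset.erase_insert (haF t ht), e1, Finset.erase_insert (haG u hu)]
    subst e2
    have n1 : insert a t ∉ F.erase t := fun h =>
      haF _ (Finset.mem_of_mem_erase h) (Finset.mem_insert_self _ _)
    have n2 : insert a t ∉ G.erase t := fun h =>
      haG _ (Finset.mem_of_mem_erase h) (Finset.mem_insert_self _ _)
    have e3 : F.erase t = G.erase t := by
      rw [← Finset.erase_insert n1, h, Finset.erase_insert n2]
    have e4 : F = G := by
      rw [← Finset.insert_erase ht, e3, Finset.insert_erase hu]
    subst e4
    rfl
  · intro G hG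
    simp only [Finset.mem_filter, mem_famA] at hG
    obtain ⟨⟨⟨h1, h2, h3, h4⟩, hc⟩, hn⟩ := hG
    obtain ⟨u, hu, hau⟩ := h3 a (Finset.mem_insert_self _ _)
    have hne : (u.erase a).Nonempty := by
      rw [Finset.nonempty_iff_ne_empty]
      intro h
      rw [Finset.erase_eq_empty_iff] at h
      rcases h with h | h
      · simp [h] at hau
      · exact hn (h ▸ hu)
    have hnot : u.erase a ∉ G := by
      intro h
      obtain ⟨x, hx⟩ := hne
      have := h4 _ h _ hu x hx (Finset.mem_of_mem_erase hx)
      rw [← this] at hau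
      simp at hau
    have hnot' : u.erase a ∉ G.erase u := fun h => hnot (Finset.mem_of_mem_erase h)
    refine ⟨⟨insert (u.erase a) (G.erase u), u.erase a⟩, ?_, ?_⟩
    · simp only [Finset.mem_sigma, mem_famA]
      refine ⟨⟨⟨?_, ?_, ?_, ?_⟩, ?_⟩, Finset.mem_insert_self _ _⟩
      · intro t ht
        rcases Finset.mem_insert.1 ht with rfl | ht
        · exact hne
        · exact h1 t (Finset.mem_of_mem_erase ht)
      · grind
      · intro x hx
        obtain ⟨t, ht, hxt⟩ := h3 x (Finset.mem_insert_of_mem hx)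
        have hxa : x ≠ a := fun h => ha (h ▸ hx)
        by_cases htu : t = u
        · subst htu
          exact ⟨_, Finset.mem_insert_self _ _, Finset.mem_erase.2 ⟨hxa, hxt⟩⟩
        · exact ⟨t, by grind, hxt⟩
      · grind
      · rw [Finset.card_insert_of_notMem hnot', Finset.card_erase_of_mem hu, hc]
        have : 0 < G.card := Finset.card_pos.2 ⟨u, hu⟩
        omega
    · simp only
      rw [Finset.erase_insert hnot', Finset.insert_erase hau, Finset.insert_erase hu]

open Classical in
theorem card_famA {α : Type*} (s : Finset α) :
    ∀ k, (famA s k).card = Nat.stirlingSecond s.card k := by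
  induction s using Finset.induction_on with
  | empty =>
    intro k
    have h : ∀ F : Finset (Finset α), IsPt ∅ F ↔ F = ∅ := by
      intro F
      constructor
      · rintro ⟨h1, h2, -, -⟩
        rw [Finset.eq_empty_iff_forall_notMem]
        intro t ht
        obtain ⟨x, hx⟩ := h1 t ht
        simpa using h2 t ht x hx
      · rintro rfl
        simp [IsPt]
    cases k with
    | zero =>
      have : famA (∅ : Finset α) 0 = {∅} := by
        ext F; rw [mem_famA, h]; simp
      rw [this]; simp
    | succ k =>
      have : famA (∅ : Finset α) (k+1) = ∅ := by
        ext F; rw [mem_famA, h]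
        simp only [Finset.notMem_empty, iff_false]
        rintro ⟨rfl, h⟩
        simp at h
      rw [this]; simp
  | insert a s ha ih =>
    intro k
    rw [Finset.card_insert_of_notMem ha]
    cases k with
    | zero =>
      rw [Nat.stirlingSecond_succ_zero, Finset.card_eq_zero, Finset.eq_empty_iff_forall_notMem]
      intro F hF
      rw [mem_famA] at hF
      obtain ⟨⟨-, -, h3, -⟩, hc⟩ := hF
      rw [Finset.card_eq_zero] at hc
      obtain ⟨t, ht, -⟩ := h3 a (Finset.mem_insert_self _ _)
      simp [hc] at ht
    | succ k =>
      rw [Nat.stirlingSecond_succ_succ, ← ih, ← ih, ← card_one s a ha k, ← card_two s a ha (k+1),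
        add_comm (Finset.card _), Finset.card_filter_add_card_filter_not]

theorem stirlingSecond_eq (p q : ℕ) : stirlingSecond p q = Nat.stirlingSecond p q := by
  have := card_famA (Finset.univ : Finset (Fin p)) q
  rw [Finset.card_univ, Fintype.card_fin] at this
  rw [← this, stirlingSecond, ← Nat.card_eq_finsetCard]
  refine Nat.card_congr (Equiv.ofBijective (fun P => ⟨P.1.parts, ?_⟩) ⟨?_, ?_⟩)
  · rw [mem_famA]
    refine ⟨⟨fun t ht => P.1.nonempty_of_mem_parts ht, fun t _ x _ => Finset.mem_univ x,
      fun x hx => P.1.exists_mem hx, ?_⟩, P.2⟩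
    intro t ht u hu x hxt hxu
    exact P.1.eq_of_mem_parts ht hu hxt hxu
  · intro P Q h
    apply Subtype.ext
    apply Finpartition.ext
    exact congrArg Subtype.val h
  · rintro ⟨F, hF⟩
    obtain ⟨⟨h1, h2, h3, h4⟩, hc⟩ := (mem_famA _ _ _).1 hF
    refine ⟨⟨⟨F, ?_, ?_, ?_⟩, hc⟩, rfl⟩
    · rw [Finset.supIndep_iff_pairwiseDisjoint]
      intro t ht u hu htu
      simp only [Function.onFun, id]
      rw [Finset.disjoint_left]
      exact fun x hx hx' => htu (h4 t ht u hu x hx hx')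
    · ext x
      simpa [Finset.mem_sup] using h3 x (Finset.mem_univ x)
    · intro h
      exact absurd (h1 _ h) (by simp)

/-- For every `d ≥ 0` and every positive integer `ν`:
`S(ν+d+1, ν) = Σ_{i=1}^{ν} i · S(i+d, i)`. -/
theorem stirling_recursion (d ν : ℕ) (hν : 1 ≤ ν) :
    stirlingSecond (ν + d + 1) ν = ∑ i ∈ Finset.Icc 1 ν, i * stirlingSecond (i + d) i := by
  simp only [stirlingSecond_eq]
  clear hν
  induction ν with
  | zero => simp
  | succ n ih =>
    rw [Finset.sum_Icc_succ_top (by omega), ← ih, Nat.stirlingSecond_succ_succ, add_comm,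
      show n + 1 + d = n + d + 1 by omega]
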